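/- arXiv:2505.01751 — 6 statements merged into one kernel-verified Lean document; each statement's English description precedes it below -/
import Mathlib

section
/- Let f : ℝ^d × ℝ^s → ℝ be twice continuously differentiable, let U ⊆ ℝ^s be open and convex, and let λ : U → ℝ^d be continuously differentiable with ∇_x f(λ(y), y) = 0 for every y ∈ U. Suppose there exist constants c > 0 and M > 0 such that for all y ∈ U: (i) ⟨D²_{xx} f(λ(y), y) v, v⟩ ≥ c‖v‖² for all v ∈ ℝ^d, and (ii) the operator norm of the mixed partial derivative matrix D²_{yx} f(λ(y), y) is at most M. Then λ is Lipschitz on U with Lipschitz constant M/c, i.e., ‖λ(y₁) − λ(y₂)‖ ≤ (M/c)‖y₁ − y₂‖ for all y₁, y₂ ∈ U. -/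
open RealInnerProductSpace

/-- If `lam y` is a critical point of `f(·, y)` for `y` in an open convex set `U`, the partial
Hessian `D²ₓₓ f(lam y, y)` is uniformly positive definite (`⟪D²ₓₓ f v, v⟫ ≥ c ‖v‖²`) and the
mixed second derivative `D²_{yx} f(lam y, y)` has operator norm at most `M` on `U`, then
`lam` is Lipschitz on `U` with constant `M / c`. -/
theorem minimizer_map_lipschitz
    {d s : ℕ}
    (f : EuclideanSpace ℝ (Fin d) → EuclideanSpace ℝ (Fin s) → ℝ)
    (hf : ContDiff ℝ 2 (fun p : EuclideanSpace ℝ (Fin d) × EuclideanSpace ℝ (Fin s) =>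
      f p.1 p.2))
    (U : Set (EuclideanSpace ℝ (Fin s))) (hUopen : IsOpen U) (hUconv : Convex ℝ U)
    (lam : EuclideanSpace ℝ (Fin s) → EuclideanSpace ℝ (Fin d))
    (hlam : ContDiffOn ℝ 1 lam U)
    (hcrit : ∀ y ∈ U, gradient (fun x => f x y) (lam y) = 0)
    (c M : ℝ) (hc : 0 < c) (hM : 0 < M)
    (hHess : ∀ y ∈ U, ∀ v : EuclideanSpace ℝ (Fin d),
      c * ‖v‖ ^ 2 ≤ ⟪fderiv ℝ (fun x => gradient (fun x' => f x' y) x) (lam y) v, v⟫)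
    (hmix : ∀ y ∈ U,
      ‖fderiv ℝ (fun y' => gradient (fun x' => f x' y') (lam y)) y‖ ≤ M) :
    ∀ y₁ ∈ U, ∀ y₂ ∈ U, ‖lam y₁ - lam y₂‖ ≤ (M / c) * ‖y₁ - y₂‖ := by
  have hG : ContDiff ℝ 1 (fun p : EuclideanSpace ℝ (Fin d) × EuclideanSpace ℝ (Fin s) =>
      gradient (fun x => f x p.2) p.1) := by
    unfold gradient
    refine (InnerProductSpace.toDual ℝ (EuclideanSpace ℝ (Fin d))).symm.toContinuousLinearEquiv.contDiff.comp ?_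
    refine ContDiff.fderiv (𝕜 := ℝ)
      (f := fun (p : EuclideanSpace ℝ (Fin d) × EuclideanSpace ℝ (Fin s)) x => f x p.2)
      (g := fun p => p.1) (n := 1) (m := 2) ?_ contDiff_fst ?_
    · exact hf.comp (g := fun p : EuclideanSpace ℝ (Fin d) × EuclideanSpace ℝ (Fin s) => f p.1 p.2)
        (f := fun q : (EuclideanSpace ℝ (Fin d) × EuclideanSpace ℝ (Fin s)) ×
          EuclideanSpace ℝ (Fin d) => (q.2, q.1.2)) (by fun_prop)
    · norm_num
  have hGd := hG.differentiable one_ne_zero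
  have hld : ∀ y ∈ U, DifferentiableAt ℝ lam y := fun y hy =>
    (hlam.differentiableOn one_ne_zero).differentiableAt (hUopen.mem_nhds hy)
  have key : ∀ y ∈ U, ‖fderiv ℝ lam y‖ ≤ M / c := by
    intro y hy
    have hD := (hGd (lam y, y)).hasFDerivAt
    set D := fderiv ℝ (fun p : EuclideanSpace ℝ (Fin d) × EuclideanSpace ℝ (Fin s) =>
      gradient (fun x => f x p.2) p.1) (lam y, y) with hDdef
    have h1 := HasFDerivAt.comp (f := fun x => (id x, y)) (lam y) hD
      ((hasFDerivAt_id (𝕜 := ℝ) (lam y)).prodMk (hasFDerivAt_const y (lam y)))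
    have h2 := HasFDerivAt.comp (f := fun x => (lam y, id x)) y hD
      ((hasFDerivAt_const (𝕜 := ℝ) (lam y) y).prodMk (hasFDerivAt_id y))
    have h3 := HasFDerivAt.comp (f := fun x => (lam x, id x)) y hD
      ((hld y hy).hasFDerivAt.prodMk (hasFDerivAt_id y))
    have e1 := h1.fderiv
    have e2 := h2.fderiv
    have e3 := h3.fderiv
    have e4 : fderiv ℝ ((fun p : EuclideanSpace ℝ (Fin d) × EuclideanSpace ℝ (Fin s) =>
      gradient (fun x => f x p.2) p.1) ∘ fun x => (lam x, id x)) y = 0 := by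
      have : ((fun p : EuclideanSpace ℝ (Fin d) × EuclideanSpace ℝ (Fin s) =>
        gradient (fun x => f x p.2) p.1) ∘ fun x => (lam x, id x)) =ᶠ[nhds y] fun _ => 0 := by
        filter_upwards [hUopen.mem_nhds hy] with z hz
        exact hcrit z hz
      rw [this.fderiv_eq]
      simp
    have hH := hHess y hy
    have hm := hmix y hy
    change ∀ v, _ ≤ ⟪(fderiv ℝ ((fun p : EuclideanSpace ℝ (Fin d) × EuclideanSpace ℝ (Fin s) =>
      gradient (fun x => f x p.2) p.1) ∘ fun x => (id x, y)) (lam y)) v, v⟫ at hH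
    change ‖fderiv ℝ ((fun p : EuclideanSpace ℝ (Fin d) × EuclideanSpace ℝ (Fin s) =>
      gradient (fun x => f x p.2) p.1) ∘ fun x => (lam y, id x)) y‖ ≤ M at hm
    rw [e1] at hH
    rw [e2] at hm
    rw [e4] at e3
    refine ContinuousLinearMap.opNorm_le_bound _ (by positivity) fun w => ?_
    set v := fderiv ℝ lam y w with hv
    have a1 : D (v, w) = 0 := by
      have := congrArg (fun L => L w) e3
      simpa using this.symm
    have a2 : ‖D (0, w)‖ ≤ M * ‖w‖ := by
      have := ContinuousLinearMap.le_of_opNorm_le _ hm w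
      simpa using this
    have a3 : c * ‖v‖ ^ 2 ≤ ⟪D (v, 0), v⟫ := by
      have := hH v
      simpa using this
    have a4 : D (v, 0) = - D (0, w) := by
      rw [eq_neg_iff_add_eq_zero, ← map_add]
      simpa using a1
    have a5 : ⟪D (v, 0), v⟫ ≤ (M * ‖w‖) * ‖v‖ := by
      refine (real_inner_le_norm _ _).trans ?_
      rw [a4, norm_neg]
      gcongr
    rw [div_mul_eq_mul_div, le_div_iff₀ hc]
    rcases (norm_nonneg v).eq_or_lt with h0 | h0
    · rw [← h0]; simp; positivity
    · have : (‖v‖ * c) * ‖v‖ ≤ (M * ‖w‖) * ‖v‖ := by linarith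
      exact le_of_mul_le_mul_right this h0
  intro y₁ h₁ y₂ h₂
  exact hUconv.norm_image_sub_le_of_norm_fderiv_le hld key h₂ h₁
end

section
/- Let g : ℝ^s → ℝ be continuously differentiable, suppose every sublevel set {y : g(y) ≤ c} is compact, and suppose g has a unique critical point y* (i.e., ∇g(y) = 0 if and only if y = y*). Then every solution y : [0,∞) → ℝ^s of the gradient flow y′(t) = −∇g(y(t)) converges to y* as t → ∞. -/
/-- If `g` is `C¹` with compact sublevel sets and a unique critical point `y*`, then every
solution of the gradient flow `y' = -∇g(y)` on `[0, ∞)` converges to `y*`. -/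
theorem gradient_flow_converges_to_unique_critical_point
    {s : ℕ}
    (g : EuclideanSpace ℝ (Fin s) → ℝ) (hg : ContDiff ℝ 1 g)
    (hsub : ∀ c : ℝ, IsCompact {y : EuclideanSpace ℝ (Fin s) | g y ≤ c})
    (ystar : EuclideanSpace ℝ (Fin s))
    (hcrit : ∀ y : EuclideanSpace ℝ (Fin s), gradient g y = 0 ↔ y = ystar)
    (y : ℝ → EuclideanSpace ℝ (Fin s))
    (hy : ∀ t ∈ Set.Ici (0 : ℝ),
      HasDerivWithinAt y (-(gradient g (y t))) (Set.Ici 0) t) :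
    Filter.Tendsto y Filter.atTop (nhds ystar) := by
  have hdiff : Differentiable ℝ g := hg.differentiable (by norm_num)
  have hgc : Continuous g := hg.continuous
  have hgradc : Continuous (fun x => gradient g x) := by
    unfold gradient
    exact (LinearIsometryEquiv.continuous _).comp (hg.continuous_fderiv (by norm_num))
  -- derivative of g along the flow
  have hder : ∀ t ∈ Set.Ici (0 : ℝ),
      HasDerivWithinAt (fun t => g (y t)) (-(‖gradient g (y t)‖ ^ 2)) (Set.Ici 0) t := by
    intro t ht
    have h1 := (hdiff (y t)).hasGradientAt.hasFDerivAt
    have h2 := h1.comp_hasDerivWithinAt t (hy t ht)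
    have h3 : (InnerProductSpace.toDual ℝ (EuclideanSpace ℝ (Fin s)) (gradient g (y t)))
        (-(gradient g (y t))) = -(‖gradient g (y t)‖ ^ 2) := by
      rw [InnerProductSpace.toDual_apply_apply, inner_neg_right, real_inner_self_eq_norm_sq]
    rw [h3] at h2
    exact h2
  have hanti : ∀ m : ℝ, (∀ t ∈ Set.Ici (0 : ℝ), m ≤ ‖gradient g (y t)‖ ^ 2) →
      AntitoneOn (fun t => g (y t) + m * t) (Set.Ici 0) := by
    intro m hm
    have hd : ∀ t ∈ Set.Ici (0 : ℝ), HasDerivWithinAt (fun t => g (y t) + m * t)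
        (-(‖gradient g (y t)‖ ^ 2) + m * 1) (Set.Ici 0) t := fun t ht =>
      (hder t ht).add ((hasDerivWithinAt_id t _).const_mul m)
    refine antitoneOn_of_hasDerivWithinAt_nonpos (convex_Ici 0)
      (f' := fun t => -(‖gradient g (y t)‖ ^ 2) + m * 1)
      (fun t ht => (hd t ht).continuousWithinAt)
      (fun t ht => (hd t (interior_subset ht)).mono interior_subset)
      (fun t ht => ?_)
    have := hm t (interior_subset ht)
    linarith
  have hdec : AntitoneOn (fun t => g (y t)) (Set.Ici 0) := by
    have := hanti 0 (fun t _ => by positivity)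
    simpa using this
  have hK : ∀ t ∈ Set.Ici (0 : ℝ), g (y t) ≤ g (y 0) := fun t ht =>
    hdec (Set.mem_Ici.2 le_rfl) ht ht
  -- a global minimiser is the critical point
  have huniq : ∀ z, (∀ x, g z ≤ g x) → z = ystar := by
    intro z hz
    rw [← hcrit]
    have : fderiv ℝ g z = 0 := IsLocalMin.fderiv_eq_zero (Filter.Eventually.of_forall hz)
    simp [gradient, this]
  have hmin : ∀ x, g ystar ≤ g x := by
    obtain ⟨z, hz, hzmin⟩ := (hsub (g (y 0))).exists_isMinOn ⟨y 0, le_refl (g (y 0))⟩ hgc.continuousOn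
    have hzg : ∀ x, g z ≤ g x := by
      intro x
      by_cases hx : g x ≤ g (y 0)
      · exact hzmin hx
      · exact le_trans hz (not_le.1 hx).le
    rwa [huniq z hzg] at hzg
  -- values become arbitrarily close to the minimum
  have hval : ∀ c, g ystar < c → ∃ T ∈ Set.Ici (0 : ℝ), g (y T) < c := by
    intro c hc
    by_contra! hcon
    have hC : IsCompact ({x | g x ≤ g (y 0)} ∩ {x | c ≤ g x}) :=
      (hsub _).inter_right (isClosed_le continuous_const hgc)
    obtain ⟨z, hz, hzmin⟩ := hC.exists_isMinOn ⟨y 0, le_refl (g (y 0)), hcon 0 (Set.mem_Ici.2 le_rfl)⟩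
      (f := fun x => ‖gradient g x‖ ^ 2) (by fun_prop)
    have hzne : gradient g z ≠ 0 := by
      intro h0
      have h1 := (hcrit z).1 h0
      have h2 : c ≤ g z := hz.2
      rw [h1] at h2
      linarith
    have hm : 0 < ‖gradient g z‖ ^ 2 := by positivity
    have hA := hanti (‖gradient g z‖ ^ 2) (fun t ht => hzmin ⟨hK t ht, hcon t ht⟩)
    have hT0 : 0 ≤ (g (y 0) - g ystar) / ‖gradient g z‖ ^ 2 :=
      div_nonneg (sub_nonneg.2 (hmin _)) hm.le
    have h3 := hA (Set.mem_Ici.2 le_rfl) (Set.mem_Ici.2 hT0) hT0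
    have h4 := hcon _ (Set.mem_Ici.2 hT0)
    simp only [mul_zero, add_zero] at h3
    rw [mul_div_cancel₀ _ hm.ne'] at h3
    linarith
  rw [tendsto_nhds]
  intro U hU hmem
  have hC : IsCompact ({x | g x ≤ g (y 0)} ∩ Uᶜ) := (hsub _).inter_right hU.isClosed_compl
  rcases Set.eq_empty_or_nonempty ({x | g x ≤ g (y 0)} ∩ Uᶜ) with he | hne
  · filter_upwards [Filter.eventually_ge_atTop (0 : ℝ)] with t ht
    by_contra hn
    have : y t ∈ ({x | g x ≤ g (y 0)} ∩ Uᶜ) := ⟨hK t ht, hn⟩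
    rw [he] at this
    exact this
  · obtain ⟨z, hz, hzmin⟩ := hC.exists_isMinOn hne hgc.continuousOn
    have hlt : g ystar < g z := by
      refine lt_of_le_of_ne (hmin z) (fun heq => ?_)
      have : z = ystar := huniq z (fun x => heq ▸ hmin x)
      exact hz.2 (this ▸ hmem)
    obtain ⟨T, hT, hTlt⟩ := hval _ hlt
    filter_upwards [Filter.eventually_ge_atTop T] with t ht
    by_contra hn
    have ht0 : t ∈ Set.Ici (0 : ℝ) := le_trans hT ht
    have h1 : g z ≤ g (y t) := hzmin ⟨hK t ht0, hn⟩
    have h2 : g (y t) ≤ g (y T) := hdec hT ht0 ht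
    linarith
end

section
/- Let f : ℝ^d × ℝ^s → ℝ be continuously differentiable and let λ : ℝ^s → ℝ^d be differentiable such that for every y ∈ ℝ^s and every x ∈ ℝ^d one has f(λ(y), y) ≤ f(x, y). Set g(y) := f(λ(y), y). Suppose every sublevel set {y : g(y) ≤ c} is compact and g has a unique critical point y*. Then every solution y : [0,∞) → ℝ^s of the ODE y′(t) = −∇_y f(λ(y(t)), y(t)) converges to y* as t → ∞, and λ(y(t)) → λ(y*) as t → ∞. -/
/-- Slow-timescale convergence: if `lam y` is a global minimizer of `f(·, y)` for each `y`,
the value function `g(y) = f(lam y, y)` has compact sublevel sets and a unique critical point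
`y*`, then every solution of `y' = -∇_y f(lam(y), y)` on `[0, ∞)` converges to `y*`, and
`lam(y(t)) → lam(y*)`. -/
theorem slow_ode_converges
    {d s : ℕ}
    (f : EuclideanSpace ℝ (Fin d) → EuclideanSpace ℝ (Fin s) → ℝ)
    (hf : ContDiff ℝ 1 (fun p : EuclideanSpace ℝ (Fin d) × EuclideanSpace ℝ (Fin s) =>
      f p.1 p.2))
    (lam : EuclideanSpace ℝ (Fin s) → EuclideanSpace ℝ (Fin d))
    (hlam : Differentiable ℝ lam)
    (hmin : ∀ (y : EuclideanSpace ℝ (Fin s)) (x : EuclideanSpace ℝ (Fin d)),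
      f (lam y) y ≤ f x y)
    (hsub : ∀ c : ℝ, IsCompact {y : EuclideanSpace ℝ (Fin s) | f (lam y) y ≤ c})
    (ystar : EuclideanSpace ℝ (Fin s))
    (hcrit : ∀ y : EuclideanSpace ℝ (Fin s),
      gradient (fun y' => f (lam y') y') y = 0 ↔ y = ystar)
    (y : ℝ → EuclideanSpace ℝ (Fin s))
    (hy : ∀ t ∈ Set.Ici (0 : ℝ),
      HasDerivWithinAt y (-(gradient (fun y' => f (lam (y t)) y') (y t))) (Set.Ici 0) t) :
    Filter.Tendsto y Filter.atTop (nhds ystar) ∧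
    Filter.Tendsto (fun t => lam (y t)) Filter.atTop (nhds (lam ystar)) := by
  classical
  have hy0 := hy
  set G : (EuclideanSpace ℝ (Fin s)) → (EuclideanSpace ℝ (Fin s)) := fun z => gradient (fun y' => f (lam z) y') z with hG
  set g : (EuclideanSpace ℝ (Fin s)) → ℝ := fun z => f (lam z) z with hg
  set F : EuclideanSpace ℝ (Fin d) × (EuclideanSpace ℝ (Fin s)) → ℝ := fun p => f p.1 p.2 with hF
  have hFd : Differentiable ℝ F := hf.differentiable (by norm_num)
  have hpart : ∀ z, HasFDerivAt (fun y' => f (lam z) y')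
      ((fderiv ℝ F (lam z, z)).comp (ContinuousLinearMap.inr ℝ _ _)) z := by
    intro z
    have h1 : HasFDerivAt F (fderiv ℝ F (lam z, z)) (lam z, z) := (hFd _).hasFDerivAt
    exact h1.comp z (hasFDerivAt_prodMk_right (lam z) z)
  have hpart1 : ∀ z, (fderiv ℝ F (lam z, z)).comp (ContinuousLinearMap.inl ℝ _ _) = 0 := by
    intro z
    have h1 : HasFDerivAt F (fderiv ℝ F (lam z, z)) (lam z, z) := (hFd _).hasFDerivAt
    have h2 := h1.comp (lam z) (hasFDerivAt_prodMk_left (𝕜 := ℝ) (lam z) z)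
    refine IsLocalMin.hasFDerivAt_eq_zero (Filter.Eventually.of_forall ?_) h2
    intro x
    exact hmin z x
  have hGeq : ∀ z, G z = (InnerProductSpace.toDual ℝ (EuclideanSpace ℝ (Fin s))).symm
      ((fderiv ℝ F (lam z, z)).comp (ContinuousLinearMap.inr ℝ _ _)) := by
    intro z
    simp only [hG, gradient, (hpart z).fderiv]
  have hGc : Continuous G := by
    have : G = fun z => (InnerProductSpace.toDual ℝ (EuclideanSpace ℝ (Fin s))).symm
      ((fderiv ℝ F (lam z, z)).comp (ContinuousLinearMap.inr ℝ _ _)) := funext hGeq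
    rw [this]
    have hc : Continuous (fun z => fderiv ℝ F (lam z, z)) :=
      (hf.continuous_fderiv (by norm_num)).comp (hlam.continuous.prodMk continuous_id)
    exact (LinearIsometryEquiv.continuous _).comp (hc.clm_comp continuous_const)
  have hgG : ∀ z, HasGradientAt g (G z) z := by
    intro z
    rw [hasGradientAt_iff_hasFDerivAt, hGeq, LinearIsometryEquiv.apply_symm_apply]
    have h1 : HasFDerivAt F (fderiv ℝ F (lam z, z)) (lam z, z) := (hFd _).hasFDerivAt
    have h2 : HasFDerivAt g ((fderiv ℝ F (lam z, z)).comp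
        ((fderiv ℝ lam z).prod (ContinuousLinearMap.id ℝ (EuclideanSpace ℝ (Fin s))))) z :=
      HasFDerivAt.comp (f := fun z => (lam z, z)) z h1 ((hlam z).hasFDerivAt.prodMk (hasFDerivAt_id z))
    refine h2.congr_fderiv ?_
    symm
    apply ContinuousLinearMap.ext
    intro v
    have h3 := congrArg (fun L => L (fderiv ℝ lam z v)) (hpart1 z)
    simp only [ContinuousLinearMap.comp_apply, ContinuousLinearMap.inl_apply,
      zero_apply] at h3
    simp only [ContinuousLinearMap.comp_apply, ContinuousLinearMap.inr_apply,
      ContinuousLinearMap.prod_apply, ContinuousLinearMap.id_apply]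
    have h4 : ((fderiv ℝ lam z v, v) : EuclideanSpace ℝ (Fin d) × (EuclideanSpace ℝ (Fin s)))
      = (fderiv ℝ lam z v, 0) + (0, v) := by simp
    rw [h4, map_add, h3, zero_add]
  have hGz : ∀ z, G z = 0 → z = ystar := by
    intro z hz
    apply (hcrit z).1
    rw [← hz]
    exact (hgG z).gradient
  have hgc : Continuous g :=
    continuous_iff_continuousAt.2 fun z => (hgG z).continuousAt
  have hy1 : ∀ t ∈ Set.Ici (0 : ℝ), HasDerivWithinAt y (-G (y t)) (Set.Ici 0) t := hy0
  have hsub1 : ∀ c : ℝ, IsCompact {z | g z ≤ c} := hsub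
  clear hy hy0 hsub hcrit
  clear_value G g
  have hyc : ContinuousOn y (Set.Ici 0) := fun t ht => (hy1 t ht).continuousWithinAt
  have hφc : ContinuousOn (fun t => g (y t)) (Set.Ici 0) := hgc.comp_continuousOn hyc
  have hφd : ∀ t, 0 < t → HasDerivAt (fun t => g (y t)) (-‖G (y t)‖ ^ 2) t := by
    intro t ht
    have h1 : HasDerivAt y (-(G (y t))) t := (hy1 t ht.le).hasDerivAt (Ici_mem_nhds ht)
    have h2 := (hgG (y t)).hasFDerivAt.comp_hasDerivAt t h1
    have h3 : (InnerProductSpace.toDual ℝ (EuclideanSpace ℝ (Fin s)) (G (y t))) (-(G (y t)))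
        = -‖G (y t)‖ ^ 2 := by
      rw [InnerProductSpace.toDual_apply_apply, inner_neg_right, real_inner_self_eq_norm_sq]
    rw [← h3]
    exact h2
  have hanti : AntitoneOn (fun t => g (y t)) (Set.Ici 0) := by
    apply antitoneOn_of_deriv_nonpos (convex_Ici 0) hφc
    · intro t ht
      rw [interior_Ici] at ht
      exact (hφd t ht).differentiableAt.differentiableWithinAt
    · intro t ht
      rw [interior_Ici] at ht
      rw [(hφd t ht).deriv]
      nlinarith [sq_nonneg ‖G (y t)‖]
  have hK : IsCompact {z : (EuclideanSpace ℝ (Fin s)) | g z ≤ g (y 0)} := hsub1 (g (y 0))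
  set K := {z : (EuclideanSpace ℝ (Fin s)) | g z ≤ g (y 0)} with hKdef
  have hyK : ∀ t, 0 ≤ t → y t ∈ K := fun t ht => hanti (Set.self_mem_Ici) ht ht
  obtain ⟨M0, hM0⟩ := hK.exists_bound_of_continuousOn hGc.continuousOn
  obtain ⟨B, hB⟩ := hK.exists_bound_of_continuousOn hgc.continuousOn
  set M := max M0 1 with hM
  have hMpos : 0 < M := lt_of_lt_of_le one_pos (le_max_right _ _)
  have hMb : ∀ z ∈ K, ‖G z‖ ≤ M := fun z hz => (hM0 z hz).trans (le_max_left _ _)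
  have hconv : ∃ L, Filter.Tendsto (fun t => g (y t)) Filter.atTop (nhds L) := by
    have ha : Antitone (fun t => g (y (max t 0))) := by
      intro a b hab
      exact hanti (le_max_right a 0) (le_max_right b 0) (max_le_max_right 0 hab)
    have hb : BddBelow (Set.range (fun t => g (y (max t 0)))) := by
      refine ⟨-B, ?_⟩
      rintro _ ⟨t, rfl⟩
      exact (abs_le.1 (hB _ (hyK _ (le_max_right t 0)))).1
    refine ⟨_, (tendsto_atTop_ciInf ha hb).congr' ?_⟩
    filter_upwards [Filter.eventually_ge_atTop 0] with t ht
    rw [max_eq_left ht]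
  obtain ⟨L, hL⟩ := hconv
  have hmain : Filter.Tendsto y Filter.atTop (nhds ystar) := by
    rw [Metric.tendsto_nhds]
    intro ε hε
    have hK' : IsCompact (K \ Metric.ball ystar (ε / 2)) := hK.diff Metric.isOpen_ball
    obtain ⟨m, hm0, hm⟩ := hK'.exists_forall_le' (f := fun z => ‖G z‖ ^ 2) (a := 0)
      (by fun_prop) (by
        intro z hz
        have : G z ≠ 0 := by
          intro h
          apply hz.2
          rw [hGz z h]
          exact Metric.mem_ball_self (by positivity)
        positivity)
    set δ := ε / 2 / M with hδ
    have hδ0 : 0 < δ := by positivity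
    have hMδ : M * δ = ε / 2 := by rw [hδ]; field_simp
    have hdiff : Filter.Tendsto (fun t => g (y t) - g (y (t + δ))) Filter.atTop (nhds 0) := by
      have h1 := hL.comp (Filter.tendsto_atTop_add_const_right Filter.atTop δ Filter.tendsto_id)
      simpa using hL.sub h1
    have hev := hdiff.eventually (gt_mem_nhds (mul_pos hm0 hδ0))
    filter_upwards [hev, Filter.eventually_ge_atTop 0] with t ht ht0
    by_contra hcon
    push Not at hcon
    have hfar : ∀ u ∈ Set.Icc t (t + δ), m ≤ ‖G (y u)‖ ^ 2 := by
      intro u hu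
      have hu0 : 0 ≤ u := ht0.trans hu.1
      apply hm
      refine ⟨hyK u hu0, ?_⟩
      have h1 : ‖y u - y t‖ ≤ M * ‖u - t‖ :=
        (convex_Ici (0:ℝ)).norm_image_sub_le_of_norm_hasDerivWithin_le (f := y)
          (f' := fun t => -G (y t)) hy1
          (fun x hx => by rw [norm_neg]; exact hMb _ (hyK x hx)) ht0 hu0
      rw [Real.norm_of_nonneg (by linarith [hu.1])] at h1
      have h2 : M * (u - t) ≤ M * δ :=
        mul_le_mul_of_nonneg_left (by linarith [hu.2]) hMpos.le
      rw [← dist_eq_norm] at h1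
      have h3 := dist_triangle (y t) (y u) ystar
      rw [dist_comm (y t) (y u)] at h3
      rw [Metric.mem_ball]
      linarith
    have hdec := (convex_Icc t (t + δ)).image_sub_le_mul_sub_of_deriv_le
      (f := fun t => g (y t)) (C := -m)
      (hφc.mono fun u hu => ht0.trans hu.1)
      (by
        intro u hu
        rw [interior_Icc] at hu
        exact (hφd u (ht0.trans_lt hu.1)).differentiableAt.differentiableWithinAt)
      (by
        intro u hu
        rw [interior_Icc] at hu
        rw [(hφd u (ht0.trans_lt hu.1)).deriv]
        linarith [hfar u ⟨hu.1.le, hu.2.le⟩])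
      t ⟨le_rfl, by linarith⟩ (t + δ) ⟨by linarith, le_rfl⟩ (by linarith)
    nlinarith
  exact ⟨hmain, (hlam.continuous.tendsto ystar).comp hmain⟩
end

section
/- Let h : ℝ^d → ℝ be twice continuously differentiable and real analytic on a neighborhood of a point x*. Suppose x* is an isolated local minimum of h, i.e., x* is a local minimum of h and some open neighborhood of x* contains no local minimum of h other than x*. Then x* is a Lyapunov stable equilibrium of the gradient flow x′(t) = −∇h(x(t)); that is, ∇h(x*) = 0 and for every ε > 0 there exists δ > 0 such that every solution x : [0,∞) → ℝ^d of x′(t) = −∇h(x(t)) with ‖x(0) − x*‖ < δ satisfies ‖x(t) − x*‖ < ε for all t ≥ 0. -/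
/-- An isolated local minimum of a `C²` function that is real analytic near the point is a
Lyapunov stable equilibrium of the gradient flow `x' = -∇h(x)`. -/
theorem isolated_analytic_local_min_is_lyapunov_stable
    {d : ℕ}
    (h : EuclideanSpace ℝ (Fin d) → ℝ) (hC2 : ContDiff ℝ 2 h)
    (xstar : EuclideanSpace ℝ (Fin d))
    (hanalytic : ∃ U : Set (EuclideanSpace ℝ (Fin d)),
      IsOpen U ∧ xstar ∈ U ∧ AnalyticOnNhd ℝ h U)
    (hmin : IsLocalMin h xstar)
    (hisolated : ∃ U : Set (EuclideanSpace ℝ (Fin d)),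
      IsOpen U ∧ xstar ∈ U ∧ ∀ x ∈ U, IsLocalMin h x → x = xstar) :
    gradient h xstar = 0 ∧
    ∀ ε > (0 : ℝ), ∃ δ > (0 : ℝ), ∀ x : ℝ → EuclideanSpace ℝ (Fin d),
      (∀ t ∈ Set.Ici (0 : ℝ),
        HasDerivWithinAt x (-(gradient h (x t))) (Set.Ici 0) t) →
      ‖x 0 - xstar‖ < δ → ∀ t ∈ Set.Ici (0 : ℝ), ‖x t - xstar‖ < ε := by
  have hdiff : Differentiable ℝ h := hC2.differentiable (by norm_num)
  have hcont : Continuous h := hC2.continuous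
  refine ⟨by simp [gradient, hmin.fderiv_eq_zero], ?_⟩
  intro ε hε
  obtain ⟨U, hUo, hxU, hU⟩ := hisolated
  have hev : ∀ᶠ y in nhds xstar, h xstar ≤ h y := hmin
  obtain ⟨R, hR, hRball⟩ := Metric.eventually_nhds_iff_ball.1 (hev.and (hUo.mem_nhds hxU))
  have hstrict : ∀ y ∈ Metric.ball xstar R, y ≠ xstar → h xstar < h y := by
    intro y hy hne
    refine lt_of_le_of_ne (hRball y hy).1 fun heq => hne ?_
    apply hU y (hRball y hy).2
    have : ∀ᶠ z in nhds y, h y ≤ h z := by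
      filter_upwards [Metric.isOpen_ball.mem_nhds hy] with z hz
      rw [← heq]
      exact (hRball z hz).1
    exact this
  obtain ⟨r, hr, hrε, hrR⟩ : ∃ r : ℝ, 0 < r ∧ r < ε ∧ r < R := by
    obtain ⟨r, h1, h2⟩ := exists_between (lt_min hε hR)
    exact ⟨r, h1, (lt_min_iff.1 h2).1, (lt_min_iff.1 h2).2⟩
  obtain ⟨m, hm, hmS⟩ : ∃ m, h xstar < m ∧ ∀ y ∈ Metric.sphere xstar r, m ≤ h y := by
    rcases (Metric.sphere xstar r).eq_empty_or_nonempty with he | hne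
    · exact ⟨h xstar + 1, by linarith, by simp [he]⟩
    · obtain ⟨y, hy, hmy⟩ := (isCompact_sphere xstar r).exists_isMinOn hne hcont.continuousOn
      refine ⟨h y, hstrict y ?_ ?_, fun z hz => hmy hz⟩
      · rw [Metric.mem_ball, Metric.mem_sphere.1 hy]; exact hrR
      · rintro rfl
        simp at hy
        exact hr.ne hy
  obtain ⟨δ, hδ, hδb⟩ := Metric.eventually_nhds_iff_ball.1
    (hcont.continuousAt.eventually_lt_const hm)
  refine ⟨min δ r, lt_min hδ hr, ?_⟩
  intro x hx hx0 t ht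
  have hxc : ContinuousOn x (Set.Ici 0) := fun s hs => (hx s hs).continuousWithinAt
  have hanti : AntitoneOn (fun s => h (x s)) (Set.Ici 0) := by
    refine antitoneOn_of_hasDerivWithinAt_nonpos (convex_Ici 0)
      (f' := fun s => fderiv ℝ h (x s) (-(gradient h (x s))))
      (hcont.comp_continuousOn hxc) ?_ ?_
    · intro s hs
      have hs' := interior_subset hs
      exact ((hdiff (x s)).hasFDerivAt.comp_hasDerivWithinAt s (hx s hs')).mono interior_subset
    · intro s hs
      have : fderiv ℝ h (x s) (gradient h (x s)) = inner ℝ (gradient h (x s)) (gradient h (x s)) := by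
        simp only [gradient, InnerProductSpace.toDual_symm_apply]
      rw [map_neg, this]
      simpa using real_inner_self_nonneg (x := gradient h (x s))
  by_contra! hcon
  have ht0 : (0:ℝ) ≤ t := ht
  have hcn : ContinuousOn (fun s => ‖x s - xstar‖) (Set.Icc 0 t) :=
    ((hxc.mono Set.Icc_subset_Ici_self).sub continuousOn_const).norm
  obtain ⟨s, hs, hsr⟩ := intermediate_value_Icc ht0 hcn
    ⟨(hx0.trans_le (min_le_right _ _)).le, hrε.le.trans hcon⟩
  have h1 : m ≤ h (x s) := hmS _ (by simpa [dist_eq_norm] using hsr)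
  have h2 : h (x s) ≤ h (x 0) := hanti Set.self_mem_Ici hs.1 hs.1
  have h3 : h (x 0) < m := hδb _ (by
    simpa [dist_eq_norm] using hx0.trans_le (min_le_left _ _))
  linarith
end

section
/- Let h : ℝ^n → ℝ^n be Lipschitz with constant L > 0, let T > 0 and b > 0, let z : [0, T] → ℝ^n be a solution of the ODE z′(t) = h(z(t)) with z(0) = z₀, and define the Euler iterates z_0 := z₀, z_{k+1} := z_k + b·h(z_k). Let M := sup_{t ∈ [0,T]} ‖h(z(t))‖. Then for every integer k with k·b ≤ T, the discretization error satisfies ‖z_k − z(k·b)‖ ≤ (M/2)(e^{LT} − 1)·b. -/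
/-- Euler discretization error bound: for an `L`-Lipschitz vector field `h`, a solution `z`
of `z' = h(z)` on `[0, T]` with `z 0 = z₀`, the Euler iterates with step `b` satisfy
`‖z_k - z(k b)‖ ≤ (M/2)(e^{LT} - 1) b` whenever `k b ≤ T`, where
`M = sup_{t ∈ [0,T]} ‖h (z t)‖`. -/
theorem euler_discretization_error
    {n : ℕ}
    (h : EuclideanSpace ℝ (Fin n) → EuclideanSpace ℝ (Fin n))
    (L : ℝ) (hL : 0 < L)
    (hLip : ∀ u v : EuclideanSpace ℝ (Fin n), ‖h u - h v‖ ≤ L * ‖u - v‖)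
    (T b : ℝ) (hT : 0 < T) (hb : 0 < b)
    (z : ℝ → EuclideanSpace ℝ (Fin n)) (z₀ : EuclideanSpace ℝ (Fin n))
    (hz0 : z 0 = z₀)
    (hz : ∀ t ∈ Set.Icc (0 : ℝ) T, HasDerivWithinAt z (h (z t)) (Set.Icc 0 T) t)
    (zk : ℕ → EuclideanSpace ℝ (Fin n))
    (hzk0 : zk 0 = z₀)
    (hzk : ∀ k : ℕ, zk (k + 1) = zk k + b • h (zk k))
    (M : ℝ) (hM : M = sSup ((fun t => ‖h (z t)‖) '' Set.Icc (0 : ℝ) T)) :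
    ∀ k : ℕ, (k : ℝ) * b ≤ T →
      ‖zk k - z ((k : ℝ) * b)‖ ≤ (M / 2) * (Real.exp (L * T) - 1) * b := by
  have hcont : ContinuousOn z (Set.Icc 0 T) := fun t ht => (hz t ht).continuousWithinAt
  have hhc : Continuous h := by
    have : LipschitzWith L.toNNReal h := by
      apply LipschitzWith.of_dist_le_mul
      intro u v
      rw [dist_eq_norm, dist_eq_norm, Real.coe_toNNReal _ hL.le]
      exact hLip u v
    exact this.continuous
  have hMb : ∀ t ∈ Set.Icc (0:ℝ) T, ‖h (z t)‖ ≤ M := by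
    intro t ht
    rw [hM]
    apply le_csSup
    · exact (isCompact_Icc.image_of_continuousOn (hhc.comp_continuousOn hcont).norm).bddAbove
    · exact ⟨t, ht, rfl⟩
  have hM0 : 0 ≤ M := (norm_nonneg _).trans (hMb 0 ⟨le_rfl, hT.le⟩)
  have hlip : ∀ s ∈ Set.Icc (0:ℝ) T, ∀ t ∈ Set.Icc (0:ℝ) T, s ≤ t →
      ‖z t - z s‖ ≤ M * (t - s) := by
    intro s hs t ht hst
    have := Convex.norm_image_sub_le_of_norm_hasDerivWithin_le hz hMb (convex_Icc 0 T) hs ht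
    rwa [Real.norm_of_nonneg (sub_nonneg.2 hst)] at this
  have hloc : ∀ s, 0 ≤ s → s + b ≤ T →
      ‖z (s + b) - z s - b • h (z s)‖ ≤ L * M * b ^ 2 / 2 := by
    intro s hs0 hsT
    have hsub : Set.Icc s (s + b) ⊆ Set.Icc 0 T := Set.Icc_subset_Icc hs0 hsT
    have hsm : s ∈ Set.Icc (0:ℝ) T := hsub ⟨le_rfl, by linarith⟩
    have key := image_norm_le_of_norm_deriv_right_le_deriv_boundary (a := s) (b := s + b)
      (f := fun t => z t - z s - (t - s) • h (z s))
      (f' := fun t => h (z t) - h (z s))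
      (B := fun t => L * M * (t - s) ^ 2 / 2) (B' := fun t => L * M * (t - s))
      ?_ ?_ ?_ ?_ ?_ (x := s + b) ⟨by linarith, le_rfl⟩
    · simpa using key
    · have := hcont.mono hsub
      fun_prop
    · intro t ht
      have htm := hsub ⟨ht.1, ht.2.le⟩
      have h1 : HasDerivWithinAt z (h (z t)) (Set.Ici t) t := by
        refine (hz t htm).mono_of_mem_nhdsWithin ?_
        exact Filter.mem_of_superset (Icc_mem_nhdsGE (show t < T from ht.2.trans_le hsT))
          (Set.Icc_subset_Icc_left htm.1)
      have h2 : HasDerivWithinAt (fun t : ℝ => (t - s) • h (z s)) ((1:ℝ) • h (z s)) (Set.Ici t) t :=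
        ((hasDerivWithinAt_id t _).sub_const s).smul_const _
      rw [one_smul] at h2
      exact (h1.sub_const (z s)).sub h2
    · simp
    · intro t
      have := ((((hasDerivAt_id t).sub_const s).pow 2).const_mul (L * M)).div_const 2
      refine HasDerivAt.congr_deriv this ?_
      simp only [id, Nat.cast_ofNat]
      ring
    · intro t ht
      have htm := hsub ⟨ht.1, ht.2.le⟩
      calc _ ≤ L * ‖z t - z s‖ := hLip _ _
        _ ≤ L * (M * (t - s)) := by
          have := hlip s hsm t htm ht.1
          gcongr
        _ = _ := by ring
  have main : ∀ k : ℕ, (k : ℝ) * b ≤ T →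
      ‖zk k - z ((k : ℝ) * b)‖ ≤ (M / 2) * (Real.exp (L * (k * b)) - 1) * b := by
    intro k
    induction k with
    | zero => intro _; simp [hzk0, hz0]
    | succ k ih =>
      intro hk
      have e1 : ((k + 1 : ℕ) : ℝ) * b = k * b + b := by push_cast; ring
      rw [e1] at hk ⊢
      have ih := ih (by linarith)
      have hl := hloc (k * b) (by positivity) hk
      set E := Real.exp (L * (k * b)) with hE
      have hE0 : 0 < E := Real.exp_pos _
      have e2 : Real.exp (L * (k * b + b)) = E * Real.exp (L * b) := by
        rw [hE, ← Real.exp_add]; ring_nf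
      rw [e2, hzk]
      have e3 : zk k + b • h (zk k) - z (k * b + b) = (zk k - z (k * b))
          + b • (h (zk k) - h (z (k * b))) - (z (k * b + b) - z (k * b) - b • h (z (k * b))) := by
        rw [smul_sub]; abel
      have h4 : ‖b • (h (zk k) - h (z (k * b)))‖ ≤ b * (L * ‖zk k - z (k * b)‖) := by
        rw [norm_smul, Real.norm_of_nonneg hb.le]
        exact mul_le_mul_of_nonneg_left (hLip _ _) hb.le
      have h5 : L * b + 1 ≤ Real.exp (L * b) := Real.add_one_le_exp _
      rw [e3]
      calc _ ≤ ‖zk k - z (k * b)‖ + b * (L * ‖zk k - z (k * b)‖) + L * M * b ^ 2 / 2 :=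
            (norm_sub_le _ _).trans (add_le_add ((norm_add_le _ _).trans
              (add_le_add le_rfl h4)) hl)
        _ = (1 + b * L) * ‖zk k - z (k * b)‖ + L * M * b ^ 2 / 2 := by ring
        _ ≤ (1 + b * L) * (M / 2 * (E - 1) * b) + L * M * b ^ 2 / 2 := by gcongr
        _ = M / 2 * (E * (L * b + 1) - 1) * b := by ring
        _ ≤ _ := by gcongr
  intro k hk
  refine (main k hk).trans ?_
  gcongr
end

section
/- Let g : ℝ^n → ℝ be continuously differentiable and let y : [0,∞) → ℝ^n be a solution of the gradient flow y′(t) = −∇g(y(t)) whose range {y(t) : t ≥ 0} is bounded. Then every limit point of y(t) as t → ∞ is a critical point of g; that is, if t_k → ∞ and y(t_k) → ȳ, then ∇g(ȳ) = 0. -/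
/-- Every limit point, as `t → ∞`, of a bounded gradient-flow trajectory of a `C¹` function
is a critical point of that function. -/
theorem limit_points_of_bounded_gradient_flow_are_critical
    {n : ℕ}
    (g : EuclideanSpace ℝ (Fin n) → ℝ) (hg : ContDiff ℝ 1 g)
    (y : ℝ → EuclideanSpace ℝ (Fin n))
    (hy : ∀ t ∈ Set.Ici (0 : ℝ),
      HasDerivWithinAt y (-(gradient g (y t))) (Set.Ici 0) t)
    (hbdd : Bornology.IsBounded (y '' Set.Ici (0 : ℝ))) :
    ∀ (ybar : EuclideanSpace ℝ (Fin n)) (tk : ℕ → ℝ),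
      Filter.Tendsto tk Filter.atTop Filter.atTop →
      Filter.Tendsto (fun k => y (tk k)) Filter.atTop (nhds ybar) →
      gradient g ybar = 0 := by
  intro ybar tk htk hlim
  have hdiff : Differentiable ℝ g := hg.differentiable (by norm_num)
  have hG : Continuous (fun x => gradient g x) := by
    unfold gradient
    exact (InnerProductSpace.toDual ℝ _).symm.continuous.comp (hg.continuous_fderiv (by norm_num))
  by_contra hne
  have hcomp : IsCompact (closure (y '' Set.Ici (0 : ℝ))) := hbdd.isCompact_closure
  obtain ⟨M, hM⟩ := hcomp.exists_bound_of_continuousOn hG.continuousOn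
  have hM' : ∀ t ∈ Set.Ici (0 : ℝ), ‖-(gradient g (y t))‖ ≤ M := by
    intro t ht
    rw [norm_neg]
    exact hM _ (subset_closure ⟨t, ht, rfl⟩)
  have hM0 : 0 ≤ M := (norm_nonneg _).trans (hM' 0 (by simp))
  have hlip : ∀ s ∈ Set.Ici (0 : ℝ), ∀ t ∈ Set.Ici (0 : ℝ), ‖y t - y s‖ ≤ M * ‖t - s‖ :=
    fun s hs t ht => (convex_Ici (0 : ℝ)).norm_image_sub_le_of_norm_hasDerivWithin_le hy hM' hs ht
  have hphic : ContinuousOn (fun t => g (y t)) (Set.Ici 0) :=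
    hdiff.continuous.comp_continuousOn (fun t ht => (hy t ht).continuousWithinAt)
  have hphi : ∀ t, 0 < t → HasDerivAt (fun t => g (y t)) (-‖gradient g (y t)‖ ^ 2) t := by
    intro t ht
    have h1 : HasDerivAt y (-(gradient g (y t))) t :=
      (hy t ht.le).hasDerivAt (Ici_mem_nhds ht)
    have h2 := (hdiff (y t)).hasGradientAt.hasFDerivAt.comp_hasDerivAt t h1
    have h3 : (InnerProductSpace.toDual ℝ (EuclideanSpace ℝ (Fin n)) (gradient g (y t)))
        (-(gradient g (y t))) = -‖gradient g (y t)‖ ^ 2 := by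
      rw [InnerProductSpace.toDual_apply_apply, inner_neg_right, real_inner_self_eq_norm_sq]
    rw [← h3]
    exact h2
  have hanti : AntitoneOn (fun t => g (y t)) (Set.Ici 0) := by
    apply antitoneOn_of_deriv_nonpos (convex_Ici 0) hphic
    · intro t ht
      rw [interior_Ici] at ht
      exact (hphi t ht).differentiableAt.differentiableWithinAt
    · intro t ht
      rw [interior_Ici] at ht
      rw [(hphi t ht).deriv]
      have := sq_nonneg ‖gradient g (y t)‖
      linarith
  have hlimg : Filter.Tendsto (fun k => g (y (tk k))) Filter.atTop (nhds (g ybar)) :=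
    (hdiff.continuous.tendsto ybar).comp hlim
  have hlow : ∀ t, 0 ≤ t → g ybar ≤ g (y t) := by
    intro t ht
    apply le_of_tendsto hlimg
    filter_upwards [htk.eventually_ge_atTop t] with k hk
    exact hanti (Set.mem_Ici.2 ht) (Set.mem_Ici.2 (ht.trans hk)) hk
  have hpos : 0 < ‖gradient g ybar‖ := norm_pos_iff.2 hne
  set c := ‖gradient g ybar‖ / 2 with hc
  have hcpos : 0 < c := by positivity
  have hev : ∀ᶠ z in nhds ybar, c < ‖gradient g z‖ :=
    (hG.norm.tendsto ybar).eventually_const_lt (by simp only [hc]; linarith)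
  obtain ⟨r, hr, hball⟩ := Metric.eventually_nhds_iff.1 hev
  set δ := r / (2 * (M + 1)) with hδ
  have hδpos : 0 < δ := by positivity
  have hMδ : M * δ < r / 2 := by
    have : (M + 1) * δ = r / 2 := by rw [hδ]; field_simp
    nlinarith
  have e1 := Metric.tendsto_nhds.1 hlim (r / 2) (by positivity)
  have e2 := hlimg.eventually_lt_const (show g ybar < g ybar + c ^ 2 * δ by
    have : 0 < c ^ 2 * δ := by positivity
    linarith)
  obtain ⟨k, hk1, hk2, hk0⟩ := (e1.and (e2.and (htk.eventually_ge_atTop 0))).exists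
  have hkey : g (y (tk k + δ)) - g (y (tk k)) ≤ (-c ^ 2) * (tk k + δ - tk k) := by
    apply (convex_Icc (tk k) (tk k + δ)).image_sub_le_mul_sub_of_deriv_le
      (f := fun t => g (y t))
      (hphic.mono (fun t ht => hk0.trans ht.1))
    · intro t ht
      rw [interior_Icc] at ht
      exact (hphi t (hk0.trans_lt ht.1)).differentiableAt.differentiableWithinAt
    · intro t ht
      rw [interior_Icc] at ht
      have ht0 : 0 < t := hk0.trans_lt ht.1
      rw [(hphi t ht0).deriv]
      have h1 := hlip (tk k) hk0 t ht0.le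
      rw [Real.norm_of_nonneg (by linarith [ht.1]), ← dist_eq_norm] at h1
      have h2 : M * (t - tk k) ≤ M * δ :=
        mul_le_mul_of_nonneg_left (by linarith [ht.2]) hM0
      have h3 := hball (y := y t) (by linarith [dist_triangle (y t) (y (tk k)) ybar])
      nlinarith
    · exact ⟨le_rfl, by linarith⟩
    · exact ⟨by linarith, le_rfl⟩
    · linarith
  have := hlow (tk k + δ) (by linarith)
  nlinarith
end
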